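/- Let p, ν ∈ ℕ with ν ≥ p. A twice-differentiable solution a : (−1,1) → ℝ of the master ODE (1−τ²)·a″(τ) + 2(p−1)·τ·a′(τ) + (ν(ν+1) − p(p−1))·a(τ) = 0 extends to a C^∞ function on an open interval containing [−1,1] if and only if there exists C ∈ ℝ such that a(τ) = C·(1−τ²)^{p}·P_ν^{(p)}(τ) for all τ ∈ (−1,1). -/

import Mathlib

/-- The Legendre polynomial `P_ν` via the Rodrigues formula. -/
noncomputable def legendreP (ν : ℕ) (τ : ℝ) : ℝ :=
  ((-1 : ℝ) ^ ν / (2 ^ ν * Nat.factorial ν)) *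
    iteratedDeriv ν (fun t : ℝ => (1 - t ^ 2) ^ ν) τ


open Polynomial in
/-- The weight polynomial satisfies a first-order ODE. -/
lemma weight_deriv (p : ℕ) :
    (1 - X ^ 2 : ℝ[X]) * derivative ((1 - X ^ 2 : ℝ[X]) ^ p)
      = - 2 * (p : ℝ[X]) * X * (1 - X ^ 2 : ℝ[X]) ^ p := by
  cases p with
  | zero => simp
  | succ n =>
    rw [derivative_pow]
    simp
    ring

open Polynomial in
/-- Polynomial form of the master ODE. -/
def PolySol (l q : ℝ[X]) (f : ℝ[X]) : Prop :=
  (1 - X ^ 2) * derivative (derivative f) + 2 * (q - 1) * X * derivative f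
    + (l - q * (q - 1)) * f = 0

open Polynomial in
lemma polySol_deriv {l q : ℝ} {f : ℝ[X]} (h : PolySol (C l) (C q) f) :
    PolySol (C l) (C (q - 1)) (derivative f) := by
  unfold PolySol at *
  have h' := congrArg derivative h
  simp only [derivative_add, derivative_mul, derivative_sub, derivative_C, derivative_one,
    derivative_X_pow, derivative_X, derivative_zero, derivative_ofNat] at h'
  simp only [C_sub, C_1]
  simp [show (C 2 : ℝ[X]) = 2 from rfl] at h'
  linear_combination h'

open Polynomial in
lemma polySol_iter {l q : ℝ} {f : ℝ[X]} (h : PolySol (C l) (C q) f) (k : ℕ) :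
    PolySol (C l) (C (q - k)) (derivative^[k] f) := by
  induction k with
  | zero => simpa using h
  | succ n ih =>
    rw [Function.iterate_succ_apply']
    have := polySol_deriv ih
    push_cast
    rwa [sub_sub] at this

open Polynomial in
lemma polySol_F (ν : ℕ) :
    PolySol (C ((ν : ℝ) * (ν + 1))) (C (ν : ℝ)) ((1 - X ^ 2 : ℝ[X]) ^ ν) := by
  have h := weight_deriv ν
  have h' := congrArg derivative h
  unfold PolySol
  generalize (1 - X ^ 2 : ℝ[X]) ^ ν = F at *
  simp only [derivative_add, derivative_mul, derivative_sub, derivative_one, derivative_neg,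
    derivative_X_pow, derivative_X, derivative_natCast, derivative_ofNat] at h'
  simp [show (C 2 : ℝ[X]) = 2 from rfl] at h' ⊢
  linear_combination h'

open Polynomial in
lemma polySol_b {l : ℝ} {u : ℝ[X]} (p : ℕ) (hu : PolySol (C l) (C (-(p : ℝ))) u) :
    PolySol (C l) (C (p : ℝ)) ((1 - X ^ 2 : ℝ[X]) ^ p * u) := by
  have h := weight_deriv p
  have h' := congrArg derivative h
  unfold PolySol at *
  generalize (1 - X ^ 2 : ℝ[X]) ^ p = F at *
  have hs : (1 - X ^ 2 : ℝ[X]) ≠ 0 := by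
    intro h0
    have := congrArg (eval 0) h0
    simp at this
  apply mul_left_cancel₀ hs
  simp only [derivative_add, derivative_mul, derivative_sub, derivative_one, derivative_neg,
    derivative_X_pow, derivative_X, derivative_natCast, derivative_ofNat] at h' ⊢
  simp [show (C 2 : ℝ[X]) = 2 from rfl] at h' hu
  simp only [C_eq_natCast, mul_zero, map_natCast]
  generalize derivative (derivative F) = F2 at *
  generalize derivative F = F1 at *
  generalize derivative (derivative u) = u2 at *
  generalize derivative u = u1 at *
  linear_combination (1 - X ^ 2) * F * hu + (1 - X ^ 2) * u * h' + 2 * (1 - X ^ 2) * u1 * h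

open Polynomial in
lemma iter_ne_zero (ν k : ℕ) (hk : k ≤ 2 * ν) :
    derivative^[k] ((1 - X ^ 2 : ℝ[X]) ^ ν) ≠ 0 := by
  intro h0
  have hd : (1 - X ^ 2 : ℝ[X]).natDegree = 2 := by compute_degree!
  have hd2 : ((1 - X ^ 2 : ℝ[X]) ^ ν).natDegree = 2 * ν := by
    rw [natDegree_pow, hd, mul_comm]
  have hne : ((1 - X ^ 2 : ℝ[X]) ^ ν) ≠ 0 := by
    apply pow_ne_zero
    intro h; rw [h] at hd; simp at hd
  have h1 := coeff_iterate_derivative (k := k) ((1 - X ^ 2 : ℝ[X]) ^ ν) (2 * ν - k)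
  rw [h0, Nat.sub_add_cancel hk, ← hd2, coeff_natDegree, coeff_zero, nsmul_eq_mul] at h1
  rcases mul_eq_zero.1 h1.symm with h | h
  · rw [Nat.cast_eq_zero, Nat.descFactorial_eq_zero_iff_lt] at h
    omega
  · exact hne (leadingCoeff_eq_zero.1 h)

open Polynomial in
lemma iteratedDeriv_poly (f : ℝ[X]) (k : ℕ) :
    iteratedDeriv k (fun t => f.eval t) = fun t => (derivative^[k] f).eval t := by
  induction k with
  | zero => simp
  | succ n ih =>
    rw [iteratedDeriv_succ, ih, Function.iterate_succ_apply']
    funext t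
    exact Polynomial.deriv _

/-- Analytic form of the master ODE on `(-1,1)`. -/
def Sol (l q : ℝ) (f : ℝ → ℝ) : Prop :=
  ∀ τ ∈ Set.Ioo (-1 : ℝ) 1,
    (1 - τ ^ 2) * deriv (deriv f) τ + 2 * (q - 1) * τ * deriv f τ + (l - q * (q - 1)) * f τ = 0

/-- Smooth on a neighbourhood of `[-1,1]`. -/
def Sm (ε : ℝ) (f : ℝ → ℝ) : Prop :=
  ContDiffOn ℝ (⊤ : ℕ∞) f (Set.Ioo (-1 - ε) (1 + ε))

lemma Sm.deriv {ε : ℝ} {f : ℝ → ℝ} (h : Sm ε f) : Sm ε (deriv f) :=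
  ContDiffOn.deriv_of_isOpen h isOpen_Ioo (by simp)

lemma Sm.iter {ε : ℝ} {f : ℝ → ℝ} (h : Sm ε f) (k : ℕ) : Sm ε (iteratedDeriv k f) := by
  induction k with
  | zero => simpa using h
  | succ n ih => rw [iteratedDeriv_succ]; exact ih.deriv

lemma Sm.diff {ε : ℝ} {f : ℝ → ℝ} (h : Sm ε f) {t : ℝ} (ht : t ∈ Set.Ioo (-1 - ε) (1 + ε)) :
    DifferentiableAt ℝ f t :=
  (ContDiffOn.differentiableOn h (by simp)).differentiableAt (isOpen_Ioo.mem_nhds ht)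

lemma Ioo_sub {ε : ℝ} (hε : 0 < ε) {t : ℝ} (ht : t ∈ Set.Ioo (-1 : ℝ) 1) :
    t ∈ Set.Ioo (-1 - ε) (1 + ε) := ⟨by linarith [ht.1], by linarith [ht.2]⟩

lemma deriv_eq_zero_of_zero {f : ℝ → ℝ} (h : ∀ τ ∈ Set.Ioo (-1 : ℝ) 1, f τ = 0) :
    ∀ τ ∈ Set.Ioo (-1 : ℝ) 1, deriv f τ = 0 := by
  intro τ hτ
  have : f =ᶠ[nhds τ] fun _ => 0 := by
    filter_upwards [isOpen_Ioo.mem_nhds hτ] with x hx using h x hx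
  rw [this.deriv_eq]; simp

lemma sol_deriv {ε l q : ℝ} (hε : 0 < ε) {f : ℝ → ℝ} (hf : Sm ε f) (h : Sol l q f) :
    Sol l (q - 1) (deriv f) := by
  intro τ hτ
  have hz := deriv_eq_zero_of_zero h τ hτ
  have h0 := (hf.diff (Ioo_sub hε hτ)).hasDerivAt
  have h1 := (hf.deriv.diff (Ioo_sub hε hτ)).hasDerivAt
  have h2 := (hf.deriv.deriv.diff (Ioo_sub hε hτ)).hasDerivAt
  have hs : HasDerivAt (fun t : ℝ => 1 - t ^ 2) (-(2 * τ)) τ := by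
    simpa using ((hasDerivAt_id τ).pow 2).const_sub 1
  have hl : HasDerivAt (fun t : ℝ => 2 * (q - 1) * t) (2 * (q - 1)) τ := by
    simpa using (hasDerivAt_id τ).const_mul (2 * (q - 1))
  have key := (((hs.mul h2).add (hl.mul h1)).add (h0.const_mul (l - q * (q - 1)))).deriv
  have key2 := key.symm.trans hz
  linear_combination key2

lemma sol_iter {ε l q : ℝ} (hε : 0 < ε) {f : ℝ → ℝ} (hf : Sm ε f) (h : Sol l q f) (k : ℕ) :
    Sol l (q - k) (iteratedDeriv k f) := by
  induction k with
  | zero => simpa using h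
  | succ n ih =>
    rw [iteratedDeriv_succ]
    have := sol_deriv hε (hf.iter n) ih
    push_cast
    rwa [sub_sub] at this

lemma const_of_sol {ε : ℝ} (ν : ℕ) (hε : 0 < ε) {w : ℝ → ℝ} (hw : Sm ε w)
    (h : Sol ((ν : ℝ) * (ν + 1)) (-(ν : ℝ)) w) :
    ∃ c, ∀ τ ∈ Set.Ioo (-1 : ℝ) 1, w τ = c := by
  have hsub : ∀ t ∈ Set.Icc (-1 : ℝ) 1, t ∈ Set.Ioo (-1 - ε) (1 + ε) :=
    fun t ht => ⟨by linarith [ht.1], by linarith [ht.2]⟩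
  have hder : ∀ τ ∈ Set.Icc (-1 : ℝ) 1,
      HasDerivAt (fun t : ℝ => (1 - t ^ 2) ^ (ν + 1) * deriv w t)
        (((ν + 1 : ℕ) : ℝ) * (1 - τ ^ 2) ^ ν * (-(2 * τ)) * deriv w τ
          + (1 - τ ^ 2) ^ (ν + 1) * deriv (deriv w) τ) τ := by
    intro τ hτ
    have h1 := (hw.deriv.diff (hsub τ hτ)).hasDerivAt
    have hs : HasDerivAt (fun t : ℝ => 1 - t ^ 2) (-(2 * τ)) τ := by
      simpa using ((hasDerivAt_id τ).pow 2).const_sub 1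
    exact (hs.pow (ν + 1)).mul h1
  have hd0 : ∀ τ ∈ Set.Ioo (-1 : ℝ) 1, deriv w τ = 0 := by
    intro τ hτ
    have hpos : (0 : ℝ) < 1 - τ ^ 2 := by nlinarith [hτ.1, hτ.2]
    have hconst := constant_of_has_deriv_right_zero (a := τ) (b := 1)
      (f := fun t : ℝ => (1 - t ^ 2) ^ (ν + 1) * deriv w t)
      (fun t ht => (hder t ⟨by linarith [hτ.1, ht.1], ht.2⟩).continuousAt.continuousWithinAt)
      (fun t ht => by
        have ht' : t ∈ Set.Ioo (-1 : ℝ) 1 := ⟨by linarith [hτ.1, ht.1], ht.2⟩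
        have := hder t ⟨ht'.1.le, ht'.2.le⟩
        have e := h t ht'
        convert this.hasDerivWithinAt using 1
        push_cast
        linear_combination - (1 - t ^ 2) ^ ν * e) 1 ⟨hτ.2.le, le_rfl⟩
    simp only [one_pow, sub_self, ne_eq, Nat.succ_ne_zero, not_false_eq_true, zero_pow,
      zero_mul] at hconst
    rcases mul_eq_zero.1 hconst.symm with h | h
    · exact absurd h (pow_pos hpos _).ne'
    · exact h
  refine ⟨w 0, fun τ hτ => ?_⟩
  exact isOpen_Ioo.is_const_of_deriv_eq_zero isPreconnected_Ioo
    (fun t ht => (hw.diff (Ioo_sub hε ht)).differentiableWithinAt) hd0 hτ (by norm_num)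

lemma zero_of_iter {ε : ℝ} (p ν : ℕ) (hpν : p ≤ ν) (hε : 0 < ε) {d : ℝ → ℝ} (hd : Sm ε d)
    (h : Sol ((ν : ℝ) * (ν + 1)) p d) (n : ℕ) (hn : n ≤ p + ν)
    (hz : ∀ τ ∈ Set.Ioo (-1 : ℝ) 1, iteratedDeriv n d τ = 0) :
    ∀ τ ∈ Set.Ioo (-1 : ℝ) 1, d τ = 0 := by
  induction n with
  | zero => simpa using hz
  | succ n ih =>
    apply ih (by omega)
    intro τ hτ
    rw [iteratedDeriv_succ] at hz
    have e := sol_iter hε hd h n τ hτ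
    rw [hz τ hτ, deriv_eq_zero_of_zero hz τ hτ] at e
    have hn' : (n : ℝ) + 1 ≤ p + ν := by exact_mod_cast hn
    have hp' : (p : ℝ) ≤ ν := by exact_mod_cast hpν
    have hn0 : (0 : ℝ) ≤ n := by positivity
    have hc : 0 < ((ν : ℝ) + (p - n)) * (ν + 1 - (p - n)) := by
      apply mul_pos <;> linarith
    have e2 : (((ν : ℝ) + (p - n)) * (ν + 1 - (p - n))) * iteratedDeriv n d τ = 0 := by
      linear_combination e
    exact (mul_eq_zero.1 e2).resolve_left hc.ne'

lemma iter_comb {ε : ℝ} (hε : 0 < ε) {f g : ℝ → ℝ} (hf : Sm ε f) (hg : Sm ε g) (A B : ℝ) (k : ℕ) :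
    ∀ τ ∈ Set.Ioo (-1 : ℝ) 1, iteratedDeriv k (fun t => B * f t - A * g t) τ
      = B * iteratedDeriv k f τ - A * iteratedDeriv k g τ := by
  induction k with
  | zero => simp
  | succ n ih =>
    intro τ hτ
    have e : iteratedDeriv n (fun t => B * f t - A * g t) =ᶠ[nhds τ]
        fun t => B * iteratedDeriv n f t - A * iteratedDeriv n g t := by
      filter_upwards [isOpen_Ioo.mem_nhds hτ] with x hx using ih x hx
    simp only [iteratedDeriv_succ]
    rw [e.deriv_eq]
    exact ((((hf.iter n).diff (Ioo_sub hε hτ)).hasDerivAt.const_mul B).sub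
      (((hg.iter n).diff (Ioo_sub hε hτ)).hasDerivAt.const_mul A)).deriv

open Polynomial in
/-- The polynomial `P_ν^{(p)}`. -/
noncomputable def uPoly (p ν : ℕ) : ℝ[X] :=
  derivative^[p] (C ((-1 : ℝ) ^ ν / (2 ^ ν * Nat.factorial ν)) *
    derivative^[ν] ((1 - X ^ 2 : ℝ[X]) ^ ν))

open Polynomial in
lemma uPoly_eq (p ν : ℕ) : uPoly p ν = C ((-1 : ℝ) ^ ν / (2 ^ ν * Nat.factorial ν)) *
    derivative^[p + ν] ((1 - X ^ 2 : ℝ[X]) ^ ν) := by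
  rw [uPoly, iterate_derivative_C_mul, Function.iterate_add_apply]

open Polynomial in
lemma legendre_iter (p ν : ℕ) :
    iteratedDeriv p (legendreP ν) = fun t => (uPoly p ν).eval t := by
  have h : legendreP ν = fun t => (C ((-1 : ℝ) ^ ν / (2 ^ ν * Nat.factorial ν)) *
    derivative^[ν] ((1 - X ^ 2 : ℝ[X]) ^ ν)).eval t := by
    funext t
    have := congrFun (iteratedDeriv_poly ((1 - X ^ 2 : ℝ[X]) ^ ν) ν) t
    simp only [eval_mul, eval_C, ← this, legendreP]
    simp
  rw [h, iteratedDeriv_poly, uPoly]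

open Polynomial in
/-- The polynomial solution. -/
noncomputable def bPoly (p ν : ℕ) : ℝ[X] := (1 - X ^ 2 : ℝ[X]) ^ p * uPoly p ν

open Polynomial in
lemma bPoly_ne (p ν : ℕ) (h : p ≤ ν) : bPoly p ν ≠ 0 := by
  rw [bPoly, uPoly_eq]
  have hs : (1 - X ^ 2 : ℝ[X]) ≠ 0 := by
    intro h0
    have := congrArg (eval 0) h0
    simp at this
  refine mul_ne_zero (pow_ne_zero _ hs) (mul_ne_zero ?_ (iter_ne_zero ν _ (by omega)))
  rw [Ne, C_eq_zero]
  positivity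

open Polynomial in
lemma bPoly_sol (p ν : ℕ) : PolySol (C ((ν : ℝ) * (ν + 1))) (C (p : ℝ)) (bPoly p ν) := by
  apply polySol_b
  have h := polySol_iter (polySol_F ν) (p + ν)
  have e : (ν : ℝ) - ((p + ν : ℕ) : ℝ) = -p := by push_cast; ring
  rw [e] at h
  rw [uPoly_eq]
  unfold PolySol at *
  simp only [derivative_C_mul]
  linear_combination C ((-1 : ℝ) ^ ν / (2 ^ ν * Nat.factorial ν)) * h

open Polynomial in
lemma bPoly_Sol (p ν : ℕ) : Sol ((ν : ℝ) * (ν + 1)) p (fun t => (bPoly p ν).eval t) := by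
  intro τ _
  have h := congrArg (eval τ) (bPoly_sol p ν)
  have e : deriv (fun t => (bPoly p ν).eval t) = fun t => (derivative (bPoly p ν)).eval t := by
    funext t; exact Polynomial.deriv _
  have e2 : deriv (fun t => (derivative (bPoly p ν)).eval t)
      = fun t => (derivative (derivative (bPoly p ν))).eval t := by
    funext t; exact Polynomial.deriv _
  rw [e, e2]
  simpa using h

lemma poly_Sm (ε : ℝ) (f : Polynomial ℝ) : Sm ε (fun t => f.eval t) :=
  f.contDiff_aeval (n := (⊤ : ℕ∞)) |>.contDiffOn

lemma bPoly_eval (p ν : ℕ) (τ : ℝ) :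
    (bPoly p ν).eval τ = (1 - τ ^ 2) ^ p * iteratedDeriv p (legendreP ν) τ := by
  rw [legendre_iter, bPoly]; simp

/-- for `ν ≥ p`, a solution of the master ODE extends smoothly past
`τ = ±1` iff it is a multiple of `(1-τ²)^p P_ν^{(p)}(τ)`. -/
theorem stmt_5 (p ν : ℕ) (hνp : p ≤ ν) (a : ℝ → ℝ)
    (hdiff : ∀ τ ∈ Set.Ioo (-1 : ℝ) 1,
      DifferentiableAt ℝ a τ ∧ DifferentiableAt ℝ (deriv a) τ)
    (hode : ∀ τ ∈ Set.Ioo (-1 : ℝ) 1,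
      (1 - τ ^ 2) * deriv (deriv a) τ + 2 * ((p : ℝ) - 1) * τ * deriv a τ
        + ((ν : ℝ) * ((ν : ℝ) + 1) - (p : ℝ) * ((p : ℝ) - 1)) * a τ = 0) :
    (∃ ε > (0 : ℝ), ∃ g : ℝ → ℝ,
        ContDiffOn ℝ (⊤ : ℕ∞) g (Set.Ioo (-1 - ε) (1 + ε)) ∧
        Set.EqOn a g (Set.Ioo (-1 : ℝ) 1))
    ↔ ∃ C : ℝ, ∀ τ ∈ Set.Ioo (-1 : ℝ) 1,
        a τ = C * (1 - τ ^ 2) ^ p * iteratedDeriv p (legendreP ν) τ := by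
  constructor
  · rintro ⟨ε, hε, g, hg, hag⟩
    have hg : Sm ε g := hg
    have hgs : Sol ((ν : ℝ) * (ν + 1)) p g := by
      intro τ hτ
      have e1 : ∀ t ∈ Set.Ioo (-1 : ℝ) 1, deriv a t = deriv g t := fun t ht =>
        (hag.eventuallyEq_of_mem (isOpen_Ioo.mem_nhds ht)).deriv_eq
      have e2 : deriv (deriv a) τ = deriv (deriv g) τ := by
        apply Filter.EventuallyEq.deriv_eq
        filter_upwards [isOpen_Ioo.mem_nhds hτ] with t ht using e1 t ht
      rw [← e2, ← e1 τ hτ, ← hag hτ]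
      exact hode τ hτ
    have hb : Sm ε (fun t => (bPoly p ν).eval t) := poly_Sm ε _
    have hbs := bPoly_Sol p ν
    have eq : (p : ℝ) - ((p + ν : ℕ) : ℝ) = -ν := by push_cast; ring
    have hA := sol_iter hε hg hgs (p + ν)
    have hB := sol_iter hε hb hbs (p + ν)
    rw [eq] at hA hB
    obtain ⟨A, hA⟩ := const_of_sol ν hε (hg.iter _) hA
    obtain ⟨B, hB⟩ := const_of_sol ν hε (hb.iter _) hB
    have hB0 : B ≠ 0 := by
      rintro rfl
      have hz := zero_of_iter p ν hνp hε hb hbs (p + ν) le_rfl hB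
      apply bPoly_ne p ν hνp
      apply Polynomial.eq_zero_of_infinite_isRoot
      exact (Set.Ioo_infinite (by norm_num : (-1 : ℝ) < 1)).mono fun t ht => hz t ht
    have hd : Sm ε (fun t => B * g t - A * (bPoly p ν).eval t) :=
      ContDiffOn.sub (contDiffOn_const.mul hg) (contDiffOn_const.mul hb)
    have hds : Sol ((ν : ℝ) * (ν + 1)) p (fun t => B * g t - A * (bPoly p ν).eval t) := by
      intro τ hτ
      have c1 := iter_comb hε hg hb A B 1 τ hτ
      have c2 := iter_comb hε hg hb A B 2 τ hτ
      simp only [iteratedDeriv_succ, iteratedDeriv_zero] at c1 c2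
      rw [c1, c2]
      linear_combination B * hgs τ hτ - A * hbs τ hτ
    have hz := zero_of_iter p ν hνp hε hd hds (p + ν) le_rfl (by
      intro τ hτ
      rw [iter_comb hε hg hb A B (p + ν) τ hτ, hA τ hτ, hB τ hτ]
      ring)
    refine ⟨A / B, fun τ hτ => ?_⟩
    have := hz τ hτ
    rw [mul_assoc, ← bPoly_eval, hag hτ]
    field_simp
    linear_combination this
  · rintro ⟨C, hC⟩
    refine ⟨1, one_pos, fun t => C * (bPoly p ν).eval t,
      contDiffOn_const.mul (poly_Sm 1 _), fun τ hτ => ?_⟩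
    simp only
    rw [hC τ hτ, bPoly_eval, mul_assoc]
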